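/- Every extreme point of the convex set of discrete POVMs on a finite outcome set whose effects pairwise commute is a projection-valued measure: each A_n satisfies A_n² = A_n. -/

import Mathlib

set_option maxHeartbeats 1000000
set_option synthInstance.maxHeartbeats 1000000

open scoped ComplexOrder

variable {H : Type*} [NormedAddCommGroup H] [InnerProductSpace ℂ H] [CompleteSpace H]

/-- A discrete POVM on the outcome set `{1, …, N}`: positive operators summing to `1`. -/
def IsDiscretePOVM {N : ℕ} {H : Type*} [NormedAddCommGroup H] [InnerProductSpace ℂ H]
    [CompleteSpace H] (A : Fin N → H →L[ℂ] H) : Prop :=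
  (∀ n, 0 ≤ A n) ∧ ∑ n, A n = 1

/-- Extremality of a discrete POVM in the convex set of discrete POVMs on the same
outcome set. -/
def IsExtremeDiscretePOVM {N : ℕ} {H : Type*} [NormedAddCommGroup H] [InnerProductSpace ℂ H]
    [CompleteSpace H] (A : Fin N → H →L[ℂ] H) : Prop :=
  IsDiscretePOVM A ∧
  ∀ (B C : Fin N → H →L[ℂ] H) (t : ℝ), 0 < t → t < 1 →
    IsDiscretePOVM B → IsDiscretePOVM C →
    (∀ n, A n = (t : ℂ) • B n + ((1 - t : ℝ) : ℂ) • C n) → B = A ∧ C = A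

/-!
Shift `A` in the direction `D l = A k * (δ_{kl} - A l)`, whose coordinates sum to zero. Both `A + D`
and `A - D` are again POVMs: their coordinates are sums of products of commuting positive
operators, for instance `(A + D) l = (1 - A k) * A l + δ_{kl} A k` and `(A - D) k = A k * A k`.
As `A` is the midpoint of `A + D` and `A - D`, extremality forces `D = 0`, and the `k`-th coordinate
of this equation is `A k - A k * A k = 0`.

The POVMs with outcomes in `ι` and values in a C⋆-algebra `𝒜` are the points of `stdSimplex 𝒜 ι`.
-/

section OutcomeShift

variable {ι 𝒜 : Type*} [DecidableEq ι]

/-- The direction `δ_k - A` from a POVM `A` towards the deterministic POVM with outcome `k`, scaled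
by the effect `A k`. It is the perturbation along which extremality of `A` is tested. -/
def outcomeShift [Ring 𝒜] (A : ι → 𝒜) (k : ι) : ι → 𝒜 :=
  Pi.single k (A k) - A k • A

theorem outcomeShift_self [Ring 𝒜] (A : ι → 𝒜) (k : ι) :
    outcomeShift A k k = A k - A k * A k := by
  rw [outcomeShift, Pi.sub_apply, Pi.single_eq_same, Pi.smul_apply, smul_eq_mul]

theorem outcomeShift_of_ne [Ring 𝒜] (A : ι → 𝒜) {k l : ι} (hlk : l ≠ k) :
    outcomeShift A k l = -(A k * A l) := by
  rw [outcomeShift, Pi.sub_apply, Pi.single_eq_of_ne hlk, Pi.smul_apply, smul_eq_mul, zero_sub]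

theorem sum_outcomeShift [Fintype ι] [Ring 𝒜] {A : ι → 𝒜} (hA : ∑ l, A l = 1) (k : ι) :
    ∑ l, outcomeShift A k l = 0 := by
  simp only [outcomeShift, Pi.sub_apply, Pi.smul_apply, Finset.sum_sub_distrib, smul_eq_mul,
    ← Finset.mul_sum, Finset.sum_pi_single', Finset.mem_univ, if_true, hA, mul_one, sub_self]

variable [Fintype ι] [CStarAlgebra 𝒜] [PartialOrder 𝒜] [StarOrderedRing 𝒜] {A : ι → 𝒜} {k : ι}

theorem add_outcomeShift_mem_stdSimplex (hA : A ∈ stdSimplex 𝒜 ι)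
    (hcomm : ∀ l, Commute (A k) (A l)) : A + outcomeShift A k ∈ stdSimplex 𝒜 ι := by
  refine ⟨fun l ↦ ?_, ?_⟩
  · have hAk : 0 ≤ 1 - A k := sub_nonneg.mpr (mem_Icc_of_mem_stdSimplex hA k).2
    have hcompl : 0 ≤ (1 - A k) * A l :=
      ((Commute.one_left _).sub_left (hcomm l)).mul_nonneg hAk (hA.1 l)
    have hsingle : 0 ≤ (Pi.single k (A k) : ι → 𝒜) l :=
      (Pi.single_nonneg (α := fun _ ↦ 𝒜)).mpr (hA.1 k) l
    calc 0 ≤ (1 - A k) * A l + (Pi.single k (A k) : ι → 𝒜) l := add_nonneg hcompl hsingle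
      _ = (A + outcomeShift A k) l := by
        rw [outcomeShift, Pi.add_apply, Pi.sub_apply, Pi.smul_apply, smul_eq_mul, one_sub_mul]
        abel
  · simp only [Pi.add_apply, Finset.sum_add_distrib, sum_outcomeShift hA.2, hA.2, add_zero]

theorem sub_outcomeShift_mem_stdSimplex (hA : A ∈ stdSimplex 𝒜 ι)
    (hcomm : ∀ l, Commute (A k) (A l)) : A - outcomeShift A k ∈ stdSimplex 𝒜 ι := by
  have hmul (l : ι) : 0 ≤ A k * A l := (hcomm l).mul_nonneg (hA.1 k) (hA.1 l)
  refine ⟨fun l ↦ ?_, ?_⟩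
  · rw [Pi.sub_apply]
    obtain rfl | hlk := eq_or_ne l k
    · rw [outcomeShift_self, sub_sub_cancel]
      exact hmul l
    · rw [outcomeShift_of_ne A hlk, sub_neg_eq_add]
      exact add_nonneg (hA.1 l) (hmul l)
  · simp only [Pi.sub_apply, Finset.sum_sub_distrib, sum_outcomeShift hA.2, hA.2, sub_zero]

end OutcomeShift

theorem IsExtremeDiscretePOVM.mem_extremePoints_stdSimplex {N : ℕ} {A : Fin N → H →L[ℂ] H}
    (hA : IsExtremeDiscretePOVM A) :
    A ∈ (stdSimplex (H →L[ℂ] H) (Fin N)).extremePoints ℝ := by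
  refine ⟨hA.1, ?_⟩
  rintro B hB C hC ⟨s, t, hs, ht, hst, hBC⟩
  obtain rfl : t = 1 - s := eq_sub_of_add_eq' hst
  refine (hA.2 B C s hs (sub_pos.mp ht) hB hC fun n ↦ ?_).1
  rw [Complex.coe_smul, Complex.coe_smul]
  exact (congrFun hBC n).symm

theorem stmt_8_general {ι 𝒜 : Type*} [Fintype ι] [CStarAlgebra 𝒜] [PartialOrder 𝒜]
    [StarOrderedRing 𝒜] {A : ι → 𝒜} (hA : A ∈ (stdSimplex 𝒜 ι).extremePoints ℝ) {k : ι}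
    (hcomm : ∀ l, Commute (A k) (A l)) : IsIdempotentElem (A k) := by
  classical
  have hshift : A + outcomeShift A k = A :=
    hA.2 (add_outcomeShift_mem_stdSimplex hA.1 hcomm) (sub_outcomeShift_mem_stdSimplex hA.1 hcomm)
      (mem_openSegment_add_sub A _)
  have hdefect : A k - A k * A k = 0 := by
    rw [← outcomeShift_self, add_eq_left.mp hshift, Pi.zero_apply]
  exact (sub_eq_zero.mp hdefect).symm

/-- Main theorem (discrete case): every extreme commutative discrete POVM is
projection valued. -/
theorem stmt_8 [TopologicalSpace.SeparableSpace H] {N : ℕ} (A : Fin N → H →L[ℂ] H)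
    (hext : IsExtremeDiscretePOVM A)
    (hcomm : ∀ k l, A k * A l = A l * A k) :
    ∀ n, A n * A n = A n :=
  fun n ↦ stmt_8_general hext.mem_extremePoints_stdSimplex (hcomm n)
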